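/- Let n ≥ 2 be an integer. The family of subgroups ker((R_k)_* : π_n(ℋ_n, 0) → π_n(Y_k^{(n)}, 0)), for k ≥ 1, forms a neighborhood basis of the identity element in π_n^top(ℋ_n, 0): each such kernel is a neighborhood of the identity, and every neighborhood of the identity contains ker((R_k)_*) for some k. -/

import Mathlib

open scoped Topology Topology.Homotopy unitInterval

noncomputable section

/-- The quotient topology on the `N`-th homotopy group, induced from the compact-open
topology on the space of generalized loops. -/
instance homotopyGroupTopology (N X : Type*) [TopologicalSpace X] (x : X) :
    TopologicalSpace (HomotopyGroup N X x) :=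
  inferInstanceAs (TopologicalSpace (Quotient (GenLoop.Homotopic.setoid N x)))

/-- The `n`-sphere of radius `1/j` centered at `(1/j, 0, …, 0)` in `ℝ^{n+1}`
(it passes through the origin). -/
def hawSphere (n j : ℕ) : Set (EuclideanSpace ℝ (Fin (n+1))) :=
  Metric.sphere (EuclideanSpace.single (0 : Fin (n+1)) ((1 : ℝ)/j)) (1/j)

/-- The `n`-dimensional Hawaiian earring: the union of the spheres `hawSphere n j`, `j ≥ 1`. -/
def hawaiian (n : ℕ) : Set (EuclideanSpace ℝ (Fin (n+1))) :=
  ⋃ j ∈ {j : ℕ | 1 ≤ j}, hawSphere n j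

/-- The union `Y_i^{(n)}` of the first `i` spheres of the `n`-dimensional Hawaiian earring. -/
def Ysub (n i : ℕ) : Set (EuclideanSpace ℝ (Fin (n+1))) :=
  ⋃ j ∈ Finset.Icc 1 i, hawSphere n j

lemma zero_mem_hawSphere (n j : ℕ) : (0 : EuclideanSpace ℝ (Fin (n+1))) ∈ hawSphere n j := by
  have : dist (0 : EuclideanSpace ℝ (Fin (n+1)))
      (EuclideanSpace.single (0 : Fin (n+1)) ((1 : ℝ)/j)) = 1/j := by
    rw [dist_zero_left, EuclideanSpace.norm_single, Real.norm_eq_abs,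
      abs_of_nonneg (one_div_nonneg.mpr (Nat.cast_nonneg j))]
  exact Metric.mem_sphere.mpr this

lemma zero_mem_hawaiian (n : ℕ) : (0 : EuclideanSpace ℝ (Fin (n+1))) ∈ hawaiian n :=
  Set.mem_biUnion (by simp : (1 : ℕ) ∈ {j : ℕ | 1 ≤ j}) (zero_mem_hawSphere n 1)

lemma zero_mem_Ysub (n i : ℕ) : (0 : EuclideanSpace ℝ (Fin (n+1))) ∈ Ysub n (i+1) :=
  Set.mem_biUnion (by simp : (1 : ℕ) ∈ Finset.Icc 1 (i+1)) (zero_mem_hawSphere n 1)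

/-- The basepoint (the origin) of the Hawaiian earring. -/
def hawaiianPt (n : ℕ) : ↥(hawaiian n) := ⟨0, zero_mem_hawaiian n⟩

/-- The basepoint (the origin) of `Y_{i+1}^{(n)}`. -/
def YsubPt (n i : ℕ) : ↥(Ysub n (i+1)) := ⟨0, zero_mem_Ysub n i⟩

/-- Composition of a generalized loop with a basepoint-preserving continuous map. -/
def GenLoop.compCM {X Y : Type*} [TopologicalSpace X] [TopologicalSpace Y] {x : X} {y : Y}
    {N : Type*} (φ : C(X, Y)) (hφ : φ x = y) (p : Ω^ N X x) : Ω^ N Y y :=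
  ⟨φ.comp p.1, fun t ht => by
    simp only [ContinuousMap.comp_apply]
    rw [p.2 t ht, hφ]⟩

/-- The homomorphism `φ_*` induced on `N`-th homotopy groups by a basepoint-preserving
continuous map `φ`, sending the class of a loop `f` to the class of `φ ∘ f`. -/
def piInduced {X Y : Type*} [TopologicalSpace X] [TopologicalSpace Y] {x : X} {y : Y}
    (N : Type*) (φ : C(X, Y)) (hφ : φ x = y) :
    HomotopyGroup N X x → HomotopyGroup N Y y :=
  Quotient.map (GenLoop.compCM φ hφ) fun _ _ h =>
    h.map fun F => F.compContinuousMap φ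

/-
Inversion in the unit sphere turns spheres tangent to each other at `0` into parallel hyperplanes.
In that picture one sees that `Y_k` is a compact neighbourhood retract; nearby loops in it are
therefore homotopic, its homotopy groups are discrete, and the kernel of `(R_k)_*` is open.

Conversely, let `α` be `R_k` as a self-map of `ℋ_n`, and let `β` collapse `Y_k` to `0` and fix the
other spheres. Then `γ = α_* γ * β_* γ` for every class `γ`. Indeed, since the walls of a cubical
grid have dimension less than `n`, a representative of `γ` can be perturbed within its spheres so
that the walls avoid the points antipodal to `0`, which are the points of the axis in the inverted
picture. The complement of these points contracts to `0`, so the walls can be pushed to `0`, along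
with everything far enough, in the inverted picture, from the axis. On a fine grid every cell then
lies in `Y_k` or meets it only in `0`, so `γ` is a product of classes that satisfy the formula; as
`n ≥ 2`, the group is commutative and such classes are closed under products. Hence a class in the
kernel of `(R_k)_*` is represented by a loop in the spheres of radius less than `1/k`.
-/

section HomotopyClass

variable {N X Y : Type*} [TopologicalSpace X] [TopologicalSpace Y] {x : X} {y : Y}

/-- The class in `π_N(X, x)` of a generalized loop. -/
def homotopyClass (f : Ω^ N X x) : HomotopyGroup N X x :=
  Quotient.mk (GenLoop.Homotopic.setoid N x) f

lemma homotopyClass_surjective :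
    Function.Surjective (homotopyClass : Ω^ N X x → HomotopyGroup N X x) :=
  Quotient.mk_surjective

lemma homotopyClass_eq_of_homotopy {f g : Ω^ N X x} (H : C(I × (I^N), X))
    (H_zero : ∀ t, H (0, t) = f t) (H_one : ∀ t, H (1, t) = g t)
    (H_boundary : ∀ s, ∀ t ∈ Cube.boundary N, H (s, t) = x) :
    homotopyClass f = homotopyClass g :=
  Quotient.sound ⟨⟨⟨H, H_zero, H_one⟩, fun s t ht => (H_boundary s t ht).trans (f.2 t ht).symm⟩⟩

lemma continuous_homotopyClass :
    Continuous (homotopyClass : Ω^ N X x → HomotopyGroup N X x) :=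
  continuous_quotient_mk'

lemma continuous_piInduced (φ : C(X, Y)) (hφ : φ x = y) : Continuous (piInduced N φ hφ) := by
  have continuous_compCM : Continuous (GenLoop.compCM φ hφ : Ω^ N X x → Ω^ N Y y) :=
    ((ContinuousMap.continuous_postcomp φ).comp continuous_subtype_val).subtype_mk _
  exact (continuous_homotopyClass.comp continuous_compCM).quotient_lift _

lemma piInduced_homotopyClass (φ : C(X, Y)) (hφ : φ x = y) (f : Ω^ N X x) :
    piInduced N φ hφ (homotopyClass f) = homotopyClass (GenLoop.compCM φ hφ f) := rfl

lemma piInduced_comp {Z : Type*} [TopologicalSpace Z] {z : Z} (ψ : C(Y, Z)) (hψ : ψ y = z)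
    (φ : C(X, Y)) (hφ : φ x = y) (hψφ : (ψ.comp φ) x = z) (γ : HomotopyGroup N X x) :
    piInduced N (ψ.comp φ) hψφ γ = piInduced N ψ hψ (piInduced N φ hφ γ) := by
  obtain ⟨f, rfl⟩ := homotopyClass_surjective γ
  rfl

variable [DecidableEq N]

lemma homotopyClass_transAt [Nonempty N] (i : N) (f g : Ω^ N X x) :
    homotopyClass (GenLoop.transAt i f g) = homotopyClass g * homotopyClass f :=
  HomotopyGroup.mul_spec.symm

lemma piInduced_mul [Nonempty N] (φ : C(X, Y)) (hφ : φ x = y) (γ γ' : HomotopyGroup N X x) :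
    piInduced N φ hφ (γ * γ') = piInduced N φ hφ γ * piInduced N φ hφ γ' := by
  obtain ⟨f, rfl⟩ := homotopyClass_surjective γ
  obtain ⟨g, rfl⟩ := homotopyClass_surjective γ'
  have i : N := Classical.arbitrary N
  simp only [← homotopyClass_transAt i, piInduced_homotopyClass]
  congr 1
  ext t
  change φ (GenLoop.transAt i g f t) = _
  simp only [GenLoop.transAt, GenLoop.coe_copy]
  split_ifs <;> rfl

lemma piInduced_one [Nonempty N] (φ : C(X, Y)) (hφ : φ x = y) : piInduced N φ hφ 1 = 1 :=
  congrArg homotopyClass (GenLoop.ext _ _ fun _ => hφ)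

lemma ker_piInduced_mem_nhds [Nonempty N] (φ : C(X, Y)) (hφ : φ x = y)
    [DiscreteTopology (HomotopyGroup N Y y)] :
    {γ : HomotopyGroup N X x | piInduced N φ hφ γ = 1} ∈ 𝓝 1 :=
  ((isOpen_discrete {1}).preimage (continuous_piInduced φ hφ)).mem_nhds (piInduced_one φ hφ)

end HomotopyClass

section Topology

variable {N : Type*}

lemma exists_homotopyClass_mem_of_dist_lt {X : Type*} [PseudoMetricSpace X] {x : X}
    [DecidableEq N] [Nonempty N] {W : Set (HomotopyGroup N X x)} (hW : W ∈ 𝓝 1) :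
    ∃ ε > 0, ∀ f : Ω^ N X x, (∀ t, dist (f t) x < ε) → homotopyClass f ∈ W := by
  have preimage_mem_nhds : homotopyClass ⁻¹' W ∈ 𝓝 (GenLoop.const : Ω^ N X x) :=
    continuous_homotopyClass.continuousAt hW
  rw [nhds_subtype_eq_comap] at preimage_mem_nhds
  obtain ⟨ε, hε, ball_subset⟩ := (Metric.nhds_basis_ball.comap _).mem_iff.mp preimage_mem_nhds
  exact ⟨ε, hε, fun f hf => ball_subset ((ContinuousMap.dist_lt_iff hε).mpr hf)⟩

variable {V : Type*} [NormedAddCommGroup V] [NormedSpace ℝ V] {K U : Set V} {r : V → V}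

lemma homotopyClass_eq_of_dist_lt {δ : ℝ} (hδ : Metric.thickening δ K ⊆ U)
    (hr : ContinuousOn r U) (r_mapsTo : Set.MapsTo r U K) (r_eq : Set.EqOn r id K) {x : K}
    {f g : Ω^ N K x} (hfg : ∀ t, dist (g t) (f t) < δ) : homotopyClass f = homotopyClass g := by
  let segment (p : I × (I^N)) : V := AffineMap.lineMap (f p.2 : V) (g p.2 : V) (p.1 : ℝ)
  have segment_mem (p) : segment p ∈ U := by
    refine hδ (Metric.mem_thickening_iff.mpr ⟨f p.2, (f p.2).2, ?_⟩)
    rw [dist_lineMap_left, Real.norm_of_nonneg p.1.2.1, dist_comm]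
    exact (mul_le_of_le_one_left dist_nonneg p.1.2.2).trans_lt (hfg p.2)
  have continuous_segment : Continuous segment := by
    simp only [segment, AffineMap.lineMap_apply_module]
    fun_prop
  refine homotopyClass_eq_of_homotopy
    ⟨fun p => ⟨r (segment p), r_mapsTo (segment_mem p)⟩,
      (hr.comp_continuous continuous_segment segment_mem).subtype_mk _⟩
    (fun t => Subtype.ext ?_) (fun t => Subtype.ext ?_) (fun s t ht => Subtype.ext ?_)
  · simpa [segment] using r_eq (f t).2
  · simpa [segment] using r_eq (g t).2
  · have f_eq : f t = x := f.2 t ht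
    have g_eq : g t = x := g.2 t ht
    simpa [segment, f_eq, g_eq] using r_eq x.2

lemma discreteTopology_homotopyGroup_of_neighborhood_retract (hK : IsCompact K) (hU : IsOpen U)
    (hKU : K ⊆ U) (hr : ContinuousOn r U) (r_mapsTo : Set.MapsTo r U K)
    (r_eq : Set.EqOn r id K) (x : K) : DiscreteTopology (HomotopyGroup N K x) := by
  obtain ⟨δ, hδ, thickening_subset⟩ := hK.exists_thickening_subset_open hU hKU
  refine discreteTopology_iff_isOpen_singleton.mpr fun γ => ?_
  change IsOpen (homotopyClass ⁻¹' {γ})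
  refine isOpen_iff_mem_nhds.mpr fun f (hf : homotopyClass f = γ) => ?_
  have ball_mem_nhds : (fun g : Ω^ N K x => g.1) ⁻¹' Metric.ball f.1 δ ∈ 𝓝 f :=
    continuous_subtype_val.continuousAt (Metric.ball_mem_nhds _ hδ)
  filter_upwards [ball_mem_nhds] with g hg
  rw [Set.mem_preimage, Set.mem_singleton_iff, ← hf]
  exact (homotopyClass_eq_of_dist_lt thickening_subset hr r_mapsTo r_eq
    fun t => (ContinuousMap.dist_apply_le_dist t).trans_lt hg).symm

end Topology

section Subdivision

variable {N X : Type*} [TopologicalSpace X] {x : X} [DecidableEq N] [Nonempty N]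

/-- Every cell of the grid in `N → ℝ` with side lengths `w` is, after rescaling, mapped by `G` as a
generalized loop with class in `S`. -/
def CellClassesIn (S : Subsemigroup (HomotopyGroup N X x)) (G : (N → ℝ) → X) (w : N → ℝ) : Prop :=
  ∀ v : N → ℤ, ∃ p : Ω^ N X x, homotopyClass p ∈ S ∧ ∀ t, p t = G fun i => w i * (v i + t i)

variable {S : Subsemigroup (HomotopyGroup N X x)} {G : (N → ℝ) → X} {w : N → ℝ}

lemma CellClassesIn.update_two_mul (h : CellClassesIn S G w) (i : N) :
    CellClassesIn S G (Function.update w i (2 * w i)) := by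
  intro v
  obtain ⟨p, p_mem, hp⟩ := h (Function.update v i (2 * v i))
  obtain ⟨q, q_mem, hq⟩ := h (Function.update v i (2 * v i + 1))
  refine ⟨GenLoop.transAt i p q, homotopyClass_transAt i p q ▸ S.mul_mem q_mem p_mem, fun t => ?_⟩
  have ht := (t i).2
  simp only [GenLoop.transAt, GenLoop.coe_copy]
  split_ifs with hti
  · rw [hp, Set.projIcc_of_mem zero_le_one ⟨by linarith [ht.1], by linarith⟩]
    congr 1 with j
    rcases eq_or_ne j i with rfl | hji
    · simp only [Function.update_self, Int.cast_mul, Int.cast_ofNat]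
      ring
    · simp only [Function.update_of_ne hji]
  · rw [hq, Set.projIcc_of_mem zero_le_one ⟨by linarith, by linarith [ht.2]⟩]
    congr 1 with j
    rcases eq_or_ne j i with rfl | hji
    · simp only [Function.update_self, Int.cast_add, Int.cast_mul, Int.cast_ofNat, Int.cast_one]
      ring
    · simp only [Function.update_of_ne hji]

lemma CellClassesIn.two_mul [Finite N] (h : CellClassesIn S G w) :
    CellClassesIn S G (fun i => 2 * w i) := by
  have := Fintype.ofFinite N
  suffices ∀ s : Finset N, CellClassesIn S G (s.piecewise (fun i => 2 * w i) w) by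
    simpa only [Finset.piecewise_univ] using this Finset.univ
  intro s
  induction s using Finset.induction_on with
  | empty => simpa only [Finset.piecewise_empty] using h
  | insert i s hi ih =>
    rw [Finset.piecewise_insert, ← s.piecewise_eq_of_notMem (fun j => 2 * w j) w hi]
    exact ih.update_two_mul i

lemma homotopyClass_mem_of_cellClassesIn [Finite N] {M : ℕ}
    (h : CellClassesIn S G fun _ => (1 / 2) ^ M) {f : Ω^ N X x}
    (hf : ∀ t, f t = G fun i => t i) : homotopyClass f ∈ S := by
  have unit_cells : CellClassesIn S G fun _ => 1 := by
    induction M with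
    | zero => simpa only [pow_zero] using h
    | succ M ih => exact ih (by convert h.two_mul using 2; ring)
  obtain ⟨p, p_mem, hp⟩ := unit_cells 0
  rwa [show f = p from GenLoop.ext _ _ fun t => by simp [hf, hp]]

end Subdivision

section Inversion

open EuclideanGeometry
open scoped RealInnerProductSpace

variable {E : Type*} [NormedAddCommGroup E] [InnerProductSpace ℝ E] {e u z : E} {c : ℝ} {A : Set ℝ}

lemma norm_inversion_zero_one (z : E) : ‖inversion 0 1 z‖ = ‖z‖⁻¹ := by
  simpa only [dist_zero_right, one_pow, one_div] using dist_inversion_center 0 z 1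

lemma inversion_zero_one_smul (c : ℝ) (z : E) :
    inversion 0 1 (c • z) = c⁻¹ • inversion 0 1 z := by
  rcases eq_or_ne c 0 with rfl | hc
  · simp
  simp only [inversion, dist_zero_right, vsub_eq_sub, sub_zero, vadd_eq_add, add_zero, norm_smul,
    smul_smul, Real.norm_eq_abs, div_pow, mul_pow, sq_abs]
  congr 1
  field_simp

/-- The union of the spheres through `0` that are mapped by inversion in the unit sphere to the
hyperplanes `⟪e, v⟫ = a`, `a ∈ A`. -/
def tangentSpheres (e : E) (A : Set ℝ) : Set E :=
  {z | z = 0 ∨ ⟪e, inversion 0 1 z⟫ ∈ A}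

lemma sphere_eq_tangentSpheres (he : ‖e‖ = 1) {r : ℝ} (hr : 0 < r) :
    Metric.sphere (r • e) r = tangentSpheres e {1 / (2 * r)} := by
  ext z
  rcases eq_or_ne z 0 with rfl | hz
  · simp [tangentSpheres, norm_smul, he, hr.le]
  have inner_eq : ⟪e, inversion 0 1 z⟫ = ⟪e, z⟫ / ‖z‖ ^ 2 := by
    simp [inversion, inner_smul_right, div_eq_inv_mul]
  have mem_sphere_iff : z ∈ Metric.sphere (r • e) r ↔ ‖z‖ ^ 2 = 2 * r * ⟪e, z⟫ := by
    rw [mem_sphere_iff_norm, ← sq_eq_sq₀ (norm_nonneg _) hr.le, norm_sub_sq_real, inner_smul_right,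
      real_inner_comm, norm_smul, he, Real.norm_of_nonneg hr.le]
    constructor <;> intro h <;> linarith
  have : ‖z‖ ≠ 0 := norm_ne_zero_iff.mpr hz
  rw [mem_sphere_iff, tangentSpheres, Set.mem_ofPred_eq, or_iff_right hz, Set.mem_singleton_iff,
    inner_eq, div_eq_div_iff (by positivity) (by positivity)]
  constructor <;> intro h <;> linarith

/-- Shrinking by the factor `c` in the direction of `e` in the inverted picture, followed by a
rescaling by `c` that restores the hyperplane of `u`: as `c` runs from `1` to `0`, the point
`push e c u` moves from the inverse of `u` to `0` inside a single sphere tangent to `eᗮ`. -/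
def push (e : E) (c : ℝ) (u : E) : E :=
  c • inversion 0 1 (u - (1 - c) • ⟪e, u⟫ • e)

lemma push_one (e u : E) : push e 1 u = inversion 0 1 u := by simp [push]

lemma push_zero (e u : E) : push e 0 u = 0 := by simp [push]

lemma push_mem_tangentSpheres (he : ‖e‖ = 1) (c : ℝ) (hu : ⟪e, u⟫ ∈ A) :
    push e c u ∈ tangentSpheres e A := by
  rcases eq_or_ne c 0 with rfl | hc
  · exact Or.inl (push_zero e u)
  refine Or.inr ?_
  suffices ⟪e, inversion 0 1 (push e c u)⟫ = ⟪e, u⟫ from this ▸ hu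
  rw [push, inversion_zero_one_smul, inversion_inversion _ one_ne_zero]
  simp only [inner_smul_right, inner_sub_right, real_inner_self_eq_norm_sq, he]
  field_simp
  ring

lemma norm_push_le (he : ‖e‖ = 1) (hc : c ∈ Set.Icc 0 1) (u : E) : ‖push e c u‖ ≤ ‖u‖⁻¹ := by
  set v := u - (1 - c) • ⟪e, u⟫ • e with hv
  have norm_sq_v : ‖v‖ ^ 2 = ‖u‖ ^ 2 - (1 - c ^ 2) * ⟪e, u⟫ ^ 2 := by
    rw [hv, norm_sub_sq_real, smul_smul, norm_smul, he, inner_smul_right, real_inner_comm,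
      Real.norm_eq_abs, mul_one, sq_abs]
    ring
  have inner_sq_le : ⟪e, u⟫ ^ 2 ≤ ‖u‖ ^ 2 := by
    simpa [he, sq_abs] using pow_le_pow_left₀ (abs_nonneg _) (abs_real_inner_le_norm e u) 2
  have mul_norm_le : c * ‖u‖ ≤ ‖v‖ := by
    refine le_of_sq_le_sq ?_ (norm_nonneg v)
    nlinarith [hc.1, hc.2, mul_nonneg (sub_nonneg.mpr hc.2) (add_nonneg zero_le_one hc.1)]
  rw [push, norm_smul, Real.norm_of_nonneg hc.1, norm_inversion_zero_one, ← hv]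
  rcases eq_or_ne v 0 with hv0 | hv0
  · simp [hv0]
  have hu : 0 < ‖u‖ := norm_pos_iff.mpr fun hu => hv0 (by simp [hv, hu])
  rwa [← div_eq_mul_inv, div_le_iff₀ (norm_pos_iff.mpr hv0), ← div_eq_inv_mul, le_div_iff₀ hu]

lemma norm_push_le_two_mul (he : ‖e‖ = 1) (hc : c ∈ Set.Icc 0 1) (hz0 : z ≠ 0)
    (hz : ‖z‖ ≤ 1 / 2) (hu : ‖u - inversion 0 1 z‖ ≤ 1) : ‖push e c u‖ ≤ 2 * ‖z‖ := by
  refine (norm_push_le he hc u).trans ?_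
  have norm_z_pos : 0 < ‖z‖ := norm_pos_iff.mpr hz0
  have le_norm_u : ‖z‖⁻¹ / 2 ≤ ‖u‖ := by
    have two_le : 2 ≤ ‖z‖⁻¹ := by
      rw [le_inv_comm₀ two_pos norm_z_pos]
      linarith
    have := norm_sub_norm_le (inversion 0 1 z) u
    rw [norm_inversion_zero_one, norm_sub_rev] at this
    linarith
  calc ‖u‖⁻¹ ≤ (‖z‖⁻¹ / 2)⁻¹ := inv_anti₀ (by positivity) le_norm_u
    _ = 2 * ‖z‖ := by rw [inv_div, div_inv_eq_mul]

lemma continuous_indicator_push {Y : Type*} [TopologicalSpace Y] (he : ‖e‖ = 1)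
    {z u : Y → E} {c : Y → ℝ} (hz : Continuous z) (hc : ContinuousOn c z.support)
    (hu : ContinuousOn u z.support) (c_mem : ∀ y, c y ∈ Set.Icc 0 1)
    (dist_le : ∀ y, z y ≠ 0 → c y ≠ 0 → ‖u y - inversion 0 1 (z y)‖ ≤ 1)
    (h : ∀ y, z y ≠ 0 → c =ᶠ[𝓝 y] 0 ∨ u y - (1 - c y) • ⟪e, u y⟫ • e ≠ 0) :
    Continuous (z.support.indicator fun y => push e (c y) (u y)) := by
  have support_mem_nhds {y : Y} (hy : z y ≠ 0) : z.support ∈ 𝓝 y :=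
    hz.continuousAt.eventually_ne hy
  refine continuous_iff_continuousAt.mpr fun y => ?_
  by_cases hy : z y = 0
  · rw [ContinuousAt, Set.indicator_of_notMem (by simpa using hy)]
    have tendsto_norm : Filter.Tendsto (fun y => 2 * ‖z y‖) (𝓝 y) (𝓝 0) := by
      simpa [hy] using (hz.norm.const_mul 2).tendsto y
    refine squeeze_zero_norm' ?_ tendsto_norm
    have small : ∀ᶠ y' in 𝓝 y, ‖z y'‖ ≤ 1 / 2 :=
      hz.norm.continuousAt.eventually_le_const (by simp [hy])
    filter_upwards [small] with y' hy'
    by_cases hz0 : z y' = 0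
    · simp [hz0]
    rw [Set.indicator_of_mem (by simpa using hz0)]
    by_cases hc0 : c y' = 0
    · simp [hc0, push_zero]
    · exact norm_push_le_two_mul he (c_mem y') hz0 hy' (dist_le y' hz0 hc0)
  · have eventually_mem := support_mem_nhds hy
    have eventuallyEq : (z.support.indicator fun y => push e (c y) (u y)) =ᶠ[𝓝 y]
        fun y => push e (c y) (u y) :=
      Set.eqOn_indicator.eventuallyEq_of_mem eventually_mem
    refine ContinuousAt.congr ?_ eventuallyEq.symm
    obtain hc0 | hne := h y hy
    · refine (continuousAt_const (y := (0 : E))).congr ?_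
      filter_upwards [hc0] with y' hy'
      rw [hy', Pi.zero_apply, push_zero]
    · have hc := hc.continuousAt eventually_mem
      have hu := hu.continuousAt eventually_mem
      refine hc.smul (continuousAt_const.inversion continuousAt_const ?_ hne)
      fun_prop

end Inversion

section SlabRetraction

open EuclideanGeometry
open scoped RealInnerProductSpace

variable {E : Type*} [NormedAddCommGroup E] [InnerProductSpace ℝ E] {e z : E} {A : Finset ℝ}

/-- A weight supported on the slab of half-width `1/4` around the hyperplane of height `a`. -/
def slabWeight (a s : ℝ) : ℝ := max 0 (1 - 4 * |s - a|)

lemma slabWeight_mem_Icc (a s : ℝ) : slabWeight a s ∈ Set.Icc 0 1 :=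
  ⟨le_max_left _ _, max_le zero_le_one (by linarith [abs_nonneg (s - a)])⟩

lemma slabWeight_eq_zero_iff {a s : ℝ} : slabWeight a s = 0 ↔ 1 / 4 ≤ |s - a| := by
  rw [slabWeight, max_eq_left_iff]
  constructor <;> intro h <;> linarith

lemma slabWeight_self (a : ℝ) : slabWeight a a = 1 := by simp [slabWeight]

lemma continuous_slabWeight (a : ℝ) : Continuous (slabWeight a) := by
  unfold slabWeight
  fun_prop

/-- The retraction onto `tangentSpheres e A` of the complement of finitely many points of the axis
`ℝ ∙ e`: in the inverted picture, the points of the slab around the hyperplane of height `a ∈ A` are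
projected to that hyperplane and then pushed to infinity (that is, to `0`) towards the boundary of
the slab. -/
def slabRetraction (e : E) (A : Finset ℝ) (z : E) : E :=
  ∑ a ∈ A, push e (slabWeight a ⟪e, inversion 0 1 z⟫)
    (inversion 0 1 z + (a - ⟪e, inversion 0 1 z⟫) • e)

lemma inner_add_sub_inner_smul (he : ‖e‖ = 1) (v : E) (a : ℝ) : ⟪e, v + (a - ⟪e, v⟫) • e⟫ = a := by
  simp [inner_add_right, inner_smul_right, he]

lemma slab_projection_ne_zero (he : ‖e‖ = 1) {a : ℝ} (ha : a ≠ 0) {v : E}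
    (hv_sub : v ≠ (a - 1 / 4) • e) (hv_add : v ≠ (a + 1 / 4) • e) (hv : |⟪e, v⟫ - a| ≤ 1 / 4) :
    v + (a - ⟪e, v⟫) • e - (1 - slabWeight a ⟪e, v⟫) • a • e ≠ 0 := by
  intro h
  have weight_eq_zero : slabWeight a ⟪e, v⟫ = 0 := by
    have inner_eq_zero := congrArg (fun w => ⟪e, w⟫) h
    simp only [inner_sub_right, inner_add_sub_inner_smul he, inner_smul_right,
      real_inner_self_eq_norm_sq, he, inner_zero_right] at inner_eq_zero
    have weight_mul_eq_zero : slabWeight a ⟪e, v⟫ * a = 0 := by linarith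
    exact (mul_eq_zero.mp weight_mul_eq_zero).resolve_right ha
  have dist_eq := hv.antisymm (slabWeight_eq_zero_iff.mp weight_eq_zero)
  have v_eq : v = ⟪e, v⟫ • e := by
    rw [← sub_eq_zero, ← h, weight_eq_zero]
    module
  rcases (abs_eq (by norm_num)).mp dist_eq with h | h
  · exact hv_add (by rw [v_eq]; congr 1; linarith)
  · exact hv_sub (by rw [v_eq]; congr 1; linarith)

lemma continuous_slabRetraction_summand (he : ‖e‖ = 1) {a : ℝ} (ha : a ≠ 0) {U : Set E}
    (hU_sub : inversion 0 1 ((a - 1 / 4) • e) ∉ U) (hU_add : inversion 0 1 ((a + 1 / 4) • e) ∉ U) :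
    Continuous ((Function.support ((↑) : U → E)).indicator fun z =>
      push e (slabWeight a ⟪e, inversion 0 1 (z : E)⟫)
        (inversion 0 1 (z : E) + (a - ⟪e, inversion 0 1 (z : E)⟫) • e)) := by
  have continuousOn_inversion : ContinuousOn (fun z : U => inversion 0 1 (z : E))
      (Function.support ((↑) : U → E)) :=
    continuousOn_const.inversion continuousOn_const continuous_subtype_val.continuousOn fun _ => id
  have continuousOn_weight := (continuous_slabWeight a).comp_continuousOn
    (continuousOn_const.inner (𝕜 := ℝ) continuousOn_inversion (f := fun _ => e))
  refine continuous_indicator_push he continuous_subtype_val continuousOn_weight ?_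
    (fun z => slabWeight_mem_Icc _ _) (fun z _ hweight => ?_) (fun z hz => ?_)
  · exact continuousOn_inversion.add ((continuousOn_const.sub
      (continuousOn_const.inner continuousOn_inversion)).smul continuousOn_const)
  · rw [Ne, slabWeight_eq_zero_iff, not_le, abs_sub_comm] at hweight
    rw [add_sub_cancel_left, norm_smul, he, mul_one, Real.norm_eq_abs]
    linarith
  · rw [inner_add_sub_inner_smul he]
    rcases le_or_gt |⟪e, inversion 0 1 (z : E)⟫ - a| (1 / 4) with hle | hgt
    · refine Or.inr
        (slab_projection_ne_zero he ha (fun h => hU_sub ?_) (fun h => hU_add ?_) hle) <;>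
        rw [← h, inversion_inversion _ one_ne_zero] <;> exact z.2
    · have continuousAt_inner : ContinuousAt (fun z : U => ⟪e, inversion 0 1 (z : E)⟫) z :=
        (continuousOn_const.inner continuousOn_inversion).continuousAt
          (continuous_subtype_val.continuousAt.eventually_ne hz)
      refine Or.inl ?_
      filter_upwards [(continuousAt_inner.sub_const a).abs.eventually_const_lt hgt] with y hy
      exact slabWeight_eq_zero_iff.mpr hy.le

lemma slabRetraction_eq_push (hA : (A : Set ℝ).Pairwise fun a b => 1 / 2 ≤ dist a b) {a : ℝ}
    (ha : a ∈ A) (hz : |⟪e, inversion 0 1 z⟫ - a| < 1 / 4) :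
    slabRetraction e A z = push e (slabWeight a ⟪e, inversion 0 1 z⟫)
      (inversion 0 1 z + (a - ⟪e, inversion 0 1 z⟫) • e) := by
  refine Finset.sum_eq_single_of_mem a ha fun b hb hba => ?_
  have separated : 1 / 2 ≤ |b - a| := hA hb ha hba
  rw [slabWeight_eq_zero_iff.mpr, push_zero]
  grind

lemma slabRetraction_mem (he : ‖e‖ = 1) (hA : (A : Set ℝ).Pairwise fun a b => 1 / 2 ≤ dist a b)
    (z : E) : slabRetraction e A z ∈ tangentSpheres e A := by
  by_cases! h : ∃ a ∈ A, |⟪e, inversion 0 1 z⟫ - a| < 1 / 4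
  · obtain ⟨a, ha, hz⟩ := h
    rw [slabRetraction_eq_push hA ha hz]
    exact push_mem_tangentSpheres he _ (by rwa [inner_add_sub_inner_smul he, Finset.mem_coe])
  · refine Or.inl (Finset.sum_eq_zero fun a ha => ?_)
    rw [slabWeight_eq_zero_iff.mpr (h a ha), push_zero]

lemma slabRetraction_zero (hA : ∀ a ∈ A, 1 / 2 ≤ a) : slabRetraction e A 0 = 0 := by
  refine Finset.sum_eq_zero fun a ha => ?_
  rw [slabWeight_eq_zero_iff.mpr, push_zero]
  rw [inversion_self, inner_zero_right, zero_sub, abs_neg]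
  linarith [le_abs_self a, hA a ha]

lemma slabRetraction_eqOn (hA_half : ∀ a ∈ A, 1 / 2 ≤ a)
    (hA : (A : Set ℝ).Pairwise fun a b => 1 / 2 ≤ dist a b) :
    Set.EqOn (slabRetraction e A) id (tangentSpheres e A) := by
  rintro z (rfl | hz)
  · exact slabRetraction_zero hA_half
  · rw [slabRetraction_eq_push hA hz (by norm_num), slabWeight_self, push_one, sub_self, zero_smul,
      add_zero, inversion_inversion _ one_ne_zero, id]

lemma discreteTopology_homotopyGroup_tangentSpheres {N : Type*} (he : ‖e‖ = 1)
    (hA_half : ∀ a ∈ A, 1 / 2 ≤ a) (hA : (A : Set ℝ).Pairwise fun a b => 1 / 2 ≤ dist a b)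
    (hcompact : IsCompact (tangentSpheres e (A : Set ℝ))) (x : tangentSpheres e (A : Set ℝ)) :
    DiscreteTopology (HomotopyGroup N (tangentSpheres e (A : Set ℝ)) x) := by
  let poles : Set E := ⋃ a ∈ A, {inversion 0 1 ((a - 1 / 4) • e), inversion 0 1 ((a + 1 / 4) • e)}
  have isClosed_poles : IsClosed poles :=
    (A.finite_toSet.biUnion fun a _ => Set.toFinite _).isClosed
  have abs_eq_of_mem_poles : ∀ z ∈ poles, ∃ a ∈ A, |⟪e, inversion 0 1 z⟫ - a| = 1 / 4 := by
    simp only [poles, Set.mem_iUnion₂]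
    rintro z ⟨a, ha, rfl | rfl⟩ <;> refine ⟨a, ha, ?_⟩ <;>
      rw [inversion_inversion _ one_ne_zero, inner_smul_right, real_inner_self_eq_norm_sq, he] <;>
      norm_num
  refine discreteTopology_homotopyGroup_of_neighborhood_retract hcompact
    isClosed_poles.isOpen_compl (fun z hz hz_pole => ?_) ?_ (fun z _ => slabRetraction_mem he hA z)
    (slabRetraction_eqOn hA_half hA) x
  · obtain ⟨a, ha, abs_eq⟩ := abs_eq_of_mem_poles z hz_pole
    rcases hz with rfl | hz
    · rw [inversion_self, inner_zero_right, zero_sub, abs_neg] at abs_eq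
      linarith [le_abs_self a, hA_half a ha]
    · have separated : 1 / 2 ≤ |⟪e, inversion 0 1 z⟫ - a| :=
        hA hz ha fun h => by norm_num [h] at abs_eq
      linarith
  · rw [continuousOn_iff_continuous_domRestrict]
    have continuous_sum := continuous_finsetSum A fun a ha =>
      continuous_slabRetraction_summand (U := polesᶜ) he (a := a)
        (by have := hA_half a ha; positivity)
        (fun h => h (Set.mem_biUnion ha (Set.mem_insert _ _)))
        (fun h => h (Set.mem_biUnion ha (Set.mem_insert_of_mem _ rfl)))
    refine continuous_sum.congr fun z => ?_
    by_cases hz : (z : E) = 0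
    · simp [Set.indicator_of_notMem, hz, slabRetraction_zero hA_half]
    · exact Finset.sum_congr rfl fun a _ => Set.indicator_of_mem hz _

end SlabRetraction

section Approximation

open scoped Manifold ContDiff
open MeasureTheory

variable {D F : Type*} [NormedAddCommGroup D] [NormedSpace ℝ D] [FiniteDimensional ℝ D]
  [NormedAddCommGroup F] [NormedSpace ℝ F] {U : Set D} {φ : D → F} {ε : ℝ}

lemma exists_differentiableOn_approx (hU : IsOpen U) (hφ : ContinuousOn φ U) (hε : 0 < ε) :
    ∃ g : D → F, DifferentiableOn ℝ g U ∧ ∀ y ∈ U, dist (g y) (φ y) < ε := by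
  let M : TopologicalSpace.Opens D := ⟨U, hU⟩
  have : ProperSpace D := FiniteDimensional.proper_real D
  have : LocallyCompactSpace M := hU.locallyCompactSpace
  have : SecondCountableTopology M := inferInstanceAs (SecondCountableTopology U)
  obtain ⟨g, g_approx, -⟩ := Continuous.exists_contMDiff_approx
    (M := M) (f := fun y => φ y) 𝓘(ℝ, D) 1 hφ.domRestrict continuous_const fun _ => hε
  let extension : D → F := Function.extend ((↑) : M → D) g 0
  have extension_apply (y : M) : extension y = g y := Subtype.val_injective.extend_apply g 0 y
  refine ⟨extension, fun y hy => ?_, fun y hy => ?_⟩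
  · have contMDiffAt : ContMDiffAt 𝓘(ℝ, D) 𝓘(ℝ, F) (1 : ℕ∞) extension
        ((⟨y, hy⟩ : M) : D) := by
      rw [← contMDiffAt_subtype_iff, funext extension_apply]
      exact g.contMDiff _
    exact ((contMDiffAt_iff_contDiffAt.mp contMDiffAt).differentiableAt
      (by simp)).differentiableWithinAt
  · rw [extension_apply ⟨y, hy⟩]
    exact g_approx ⟨y, hy⟩

variable [FiniteDimensional ℝ F] [MeasurableSpace D] [BorelSpace D] {μ : Measure D}
  [μ.IsAddHaarMeasure] {Z : Set D}

lemma dense_compl_image_of_differentiableOn (h : Module.finrank ℝ D = Module.finrank ℝ F)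
    {g : D → F} (hg : DifferentiableOn ℝ g Z) (hZ : μ Z = 0) : Dense (g '' Z)ᶜ := by
  let L : F ≃L[ℝ] D := ContinuousLinearEquiv.ofFinrankEq h.symm
  have null_image : μ ((L ∘ g) '' Z) = 0 :=
    addHaar_image_eq_zero_of_differentiableOn_of_addHaar_eq_zero μ
      (L.differentiable.comp_differentiableOn hg) hZ
  have dense_compl : Dense ((L ∘ g) '' Z)ᶜ :=
    interior_eq_empty_iff_dense_compl.mp (μ.interior_eq_empty_of_null null_image)
  rw [Set.image_comp, ← Set.image_compl_eq L.bijective] at dense_compl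
  simpa [Set.image_image] using
    L.symm.surjective.denseRange.dense_image L.symm.continuous dense_compl

lemma exists_continuousOn_approx_ne_zero (h : Module.finrank ℝ D = Module.finrank ℝ F)
    (hU : IsOpen U) (hφ : ContinuousOn φ U) (hε : 0 < ε) (hZ : μ Z = 0) :
    ∃ u : D → F, ContinuousOn u U ∧
      ∀ y ∈ U, dist (u y) (φ y) < ε ∧ (y ∈ Z → u y ≠ 0) := by
  obtain ⟨g, hg, g_approx⟩ := exists_differentiableOn_approx hU hφ (half_pos hε)
  obtain ⟨q, q_notMem, hq⟩ := (dense_compl_image_of_differentiableOn h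
    (hg.mono Set.inter_subset_left)
    (measure_mono_null Set.inter_subset_right hZ)).exists_dist_lt 0 (half_pos hε)
  refine ⟨fun y => g y - q, hg.continuousOn.sub continuousOn_const, fun y hy => ⟨?_, fun hyZ h0 =>
    q_notMem ⟨y, ⟨hy, hyZ⟩, sub_eq_zero.mp h0⟩⟩⟩
  calc dist (g y - q) (φ y) ≤ dist (g y - q) (g y) + dist (g y) (φ y) := dist_triangle _ _ _
    _ < ε / 2 + ε / 2 := by
      refine add_lt_add ?_ (g_approx y hy)
      rwa [dist_self_sub_left, ← dist_zero_left]
    _ = ε := add_halves ε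

lemma volume_exists_apply_mem_eq_zero {N : Type*} [Fintype N] {Q : Set ℝ} (hQ : Q.Countable) :
    volume {y : N → ℝ | ∃ i, y i ∈ Q} = 0 := by
  have eq_iUnion : {y : N → ℝ | ∃ i, y i ∈ Q} = ⋃ i, ⋃ q ∈ Q, {y | y i = q} := by
    ext
    simp
  rw [eq_iUnion, volume_pi]
  exact measure_iUnion_null fun i => (measure_biUnion_null_iff hQ).mpr fun q _ =>
    Measure.pi_hyperplane (fun _ : N => (volume : Measure ℝ)) i q

end Approximation

section Collapse

open EuclideanGeometry
open scoped RealInnerProductSpace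

variable {E : Type*} [NormedAddCommGroup E] [InnerProductSpace ℝ E] {e : E}

/-- A perturbation, in the inverted picture and within the hyperplanes orthogonal to `e`, of a map
`F` into a union of spheres tangent at `0`. -/
structure IsInversePerturbation {Y : Type*} [TopologicalSpace Y] (e : E) (F u : Y → E) : Prop where
  continuousOn : ContinuousOn u F.support
  inner_eq : ∀ y, F y ≠ 0 → ⟪e, u y⟫ = ⟪e, inversion 0 1 (F y)⟫
  norm_sub_lt : ∀ y, F y ≠ 0 → ‖u y - inversion 0 1 (F y)‖ < 1

lemma exists_isInversePerturbation_ne_smul {N : Type*} [Fintype N] (he : ‖e‖ = 1)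
    (hE : Module.finrank ℝ E = Fintype.card N + 1) {F : (N → ℝ) → E} (hF : Continuous F)
    {Q : Set ℝ} (hQ : Q.Countable) :
    ∃ u, IsInversePerturbation e F u ∧
      ∀ y, F y ≠ 0 → (∃ i, y i ∈ Q) → u y ≠ ⟪e, u y⟫ • e := by
  have : Fact (Module.finrank ℝ E = Fintype.card N + 1) := ⟨hE⟩
  have : FiniteDimensional ℝ E := .of_fact_finrank_eq_succ (Fintype.card N)
  have he0 : e ≠ 0 := norm_ne_zero_iff.mp (he ▸ one_ne_zero)
  have finrank_eq : Module.finrank ℝ (N → ℝ) = Module.finrank ℝ (ℝ ∙ e)ᗮ := by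
    rw [Module.finrank_fintype_fun_eq_card,
      Submodule.finrank_orthogonal_span_singleton (n := Fintype.card N) he0]
  have continuousOn_inversion : ContinuousOn (fun y => inversion 0 1 (F y)) F.support :=
    continuousOn_const.inversion continuousOn_const hF.continuousOn fun _ => id
  obtain ⟨w, hw, hw_approx⟩ := exists_continuousOn_approx_ne_zero finrank_eq
    hF.isOpen_support ((ℝ ∙ e)ᗮ.orthogonalProjectionOnto.continuous.comp_continuousOn
      continuousOn_inversion) one_pos (volume_exists_apply_mem_eq_zero hQ)
  have inner_w (y) : ⟪e, (w y : E)⟫ = 0 :=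
    Submodule.mem_orthogonal_singleton_iff_inner_right.mp (w y).2
  have inner_u (y) : ⟪e, ⟪e, inversion 0 1 (F y)⟫ • e + w y⟫ = ⟪e, inversion 0 1 (F y)⟫ := by
    simp [inner_add_right, inner_smul_right, he, inner_w]
  refine ⟨fun y => ⟪e, inversion 0 1 (F y)⟫ • e + w y, ⟨?_, fun y _ => inner_u y, fun y hy => ?_⟩,
    fun y hy hyQ h => (hw_approx y hy).2 hyQ ?_⟩
  · exact ((continuousOn_const.inner continuousOn_inversion).smul continuousOn_const).add
      (continuous_subtype_val.comp_continuousOn hw)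
  · have projection_eq := (ℝ ∙ e).starProjection_orthogonal_val (inversion 0 1 (F y))
    rw [Submodule.starProjection_unit_singleton ℝ he] at projection_eq
    rw [add_sub_right_comm, ← neg_sub, ← projection_eq, neg_add_eq_sub]
    exact (dist_eq_norm _ _).symm.trans_lt (hw_approx y hy).1
  · rwa [inner_u, add_eq_left, Submodule.coe_eq_zero] at h

/-- The homotopy from `F` to `push e (lam ·) (u ·)` inside each of the spheres tangent at `0`. -/
def collapse {Y : Type*} (e : E) (F u : Y → E) (lam : Y → ℝ) : I × Y → E :=
  (Function.support fun p : I × Y => F p.2).indicator fun p =>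
    push e (1 - p.1 + p.1 * lam p.2) ((1 - p.1 : ℝ) • inversion 0 1 (F p.2) + (p.1 : ℝ) • u p.2)

variable {Y : Type*} {F u : Y → E} {lam : Y → ℝ}

lemma collapse_of_eq_zero {y : Y} (hy : F y = 0) (t : I) : collapse e F u lam (t, y) = 0 :=
  Set.indicator_of_notMem (by simpa using hy) _

lemma collapse_of_ne_zero {y : Y} (hy : F y ≠ 0) (t : I) : collapse e F u lam (t, y) =
    push e (1 - t + t * lam y) ((1 - t : ℝ) • inversion 0 1 (F y) + (t : ℝ) • u y) :=
  Set.indicator_of_mem (by simpa using hy) _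

lemma collapse_zero (y : Y) : collapse e F u lam (0, y) = F y := by
  by_cases hy : F y = 0
  · rw [collapse_of_eq_zero hy, hy]
  · simp [collapse_of_ne_zero hy, push_one, inversion_inversion]

lemma collapse_one_of_eq_zero {y : Y} (hy : lam y = 0) : collapse e F u lam (1, y) = 0 := by
  by_cases hF : F y = 0
  · exact collapse_of_eq_zero hF 1
  · simp [collapse_of_ne_zero hF, hy, push_zero]

variable [TopologicalSpace Y]

lemma collapse_mem_tangentSpheres (he : ‖e‖ = 1) (hu : IsInversePerturbation e F u) {A : Set ℝ}
    {y : Y} (hy : F y ∈ tangentSpheres e A) (t : I) :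
    collapse e F u lam (t, y) ∈ tangentSpheres e A := by
  by_cases hF : F y = 0
  · exact Or.inl (collapse_of_eq_zero hF t)
  rw [collapse_of_ne_zero hF]
  refine push_mem_tangentSpheres he _ ?_
  convert hy.resolve_left hF using 1
  rw [inner_add_right, inner_smul_right, inner_smul_right, hu.inner_eq y hF]
  ring

lemma mem_tangentSpheres_of_collapse_mem (he : ‖e‖ = 1) (hu : IsInversePerturbation e F u)
    {A : Set ℝ} {y : Y} {t : I} (h0 : collapse e F u lam (t, y) ≠ 0)
    (h : collapse e F u lam (t, y) ∈ tangentSpheres e A) : F y ∈ tangentSpheres e A := by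
  have inner_eq : ⟪e, inversion 0 1 (collapse e F u lam (t, y))⟫ = ⟪e, inversion 0 1 (F y)⟫ :=
    (collapse_mem_tangentSpheres he hu (A := {_}) (Or.inr rfl) t).resolve_left h0
  exact Or.inr (inner_eq ▸ h.resolve_left h0)

lemma interpolation_sub_smul_ne_zero (he : ‖e‖ = 1) {v w : E} (inner_eq : ⟪e, w⟫ = ⟪e, v⟫)
    (hv : ⟪e, v⟫ ≠ 0) {c : ℝ} (hc : 0 ≤ c) (hw : c = 0 → w ≠ ⟪e, w⟫ • e) (t : I) :
    (1 - t : ℝ) • v + (t : ℝ) • w -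
      (1 - (1 - t + t * c)) • ⟪e, (1 - t : ℝ) • v + (t : ℝ) • w⟫ • e ≠ 0 := by
  have inner_interpolation : ⟪e, (1 - t : ℝ) • v + (t : ℝ) • w⟫ = ⟪e, v⟫ := by
    rw [inner_add_right, inner_smul_right, inner_smul_right, inner_eq]
    ring
  rw [inner_interpolation]
  intro h
  have coeff_eq_zero : (1 - t + t * c : ℝ) = 0 := by
    have inner_eq_zero := congrArg (fun v => ⟪e, v⟫) h
    simp only [inner_sub_right, inner_interpolation, inner_smul_right, real_inner_self_eq_norm_sq,
      he, inner_zero_right] at inner_eq_zero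
    refine (mul_eq_zero.mp ?_).resolve_right hv
    linarith
  have t_eq_one : (t : ℝ) = 1 := by linarith [t.2.2, mul_nonneg t.2.1 hc]
  rw [t_eq_one] at coeff_eq_zero h
  have c_eq_zero : c = 0 := by linarith
  refine hw c_eq_zero ?_
  simpa [c_eq_zero, inner_eq, sub_eq_zero] using h

lemma continuous_collapse (he : ‖e‖ = 1) (hF : Continuous F)
    (hF_inner : ∀ y, F y ≠ 0 → ⟪e, inversion 0 1 (F y)⟫ ≠ 0) (hu : IsInversePerturbation e F u)
    (hlam : ContinuousOn lam F.support) (lam_mem : ∀ y, lam y ∈ Set.Icc 0 1)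
    (ne_smul : ∀ y, F y ≠ 0 → lam y = 0 → u y ≠ ⟪e, u y⟫ • e) :
    Continuous (collapse e F u lam) := by
  have continuousOn_inversion : ContinuousOn (fun y => inversion 0 1 (F y)) F.support :=
    continuousOn_const.inversion continuousOn_const hF.continuousOn fun _ => id
  have continuousOn_time :
      ContinuousOn (fun p : I × Y => (p.1 : ℝ)) (Function.support fun p => F p.2) :=
    (continuous_subtype_val.comp continuous_fst).continuousOn
  have mapsTo_snd : Set.MapsTo Prod.snd (Function.support fun p : I × Y => F p.2) F.support :=
    fun _ => id
  refine continuous_indicator_push he (hF.comp continuous_snd)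
    ((continuousOn_const.sub continuousOn_time).add
      (continuousOn_time.mul (hlam.comp continuous_snd.continuousOn mapsTo_snd)))
    (((continuousOn_const.sub continuousOn_time).smul
      (continuousOn_inversion.comp continuous_snd.continuousOn mapsTo_snd)).add
      (continuousOn_time.smul (hu.continuousOn.comp continuous_snd.continuousOn mapsTo_snd)))
    (fun p => ?_) (fun p hp _ => ?_) (fun p hp => Or.inr (interpolation_sub_smul_ne_zero he
      (hu.inner_eq p.2 hp) (hF_inner p.2 hp) (lam_mem p.2).1 (ne_smul p.2 hp) p.1))
  · obtain ⟨⟨t_nonneg, t_le⟩, lam_nonneg, lam_le⟩ := And.intro p.1.2 (lam_mem p.2)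
    exact ⟨by nlinarith, by nlinarith⟩
  · rw [show (1 - p.1 : ℝ) • inversion 0 1 (F p.2) + (p.1 : ℝ) • u p.2 - inversion 0 1 (F p.2) =
      (p.1 : ℝ) • (u p.2 - inversion 0 1 (F p.2)) by module, norm_smul,
      Real.norm_of_nonneg p.1.2.1]
    exact mul_le_one₀ p.1.2.2 (norm_nonneg _) (hu.norm_sub_lt p.2 hp).le

end Collapse

section Splitting

variable {N X : Type*} [TopologicalSpace X] {x : X} {α β : C(X, X)} {Y : Set X}

/-- `α` collapses the complement of `Y` to `x`, and `β` collapses `Y` to `x`. -/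
structure IsComplementaryCollapse (α β : C(X, X)) (x : X) (Y : Set X) : Prop where
  left_of_mem : ∀ z ∈ Y, α z = z
  left_of_notMem : ∀ z ∉ Y, α z = x
  right_of_mem : ∀ z ∈ Y, β z = x
  right_of_notMem : ∀ z ∉ Y, β z = z

lemma IsComplementaryCollapse.left_basepoint (h : IsComplementaryCollapse α β x Y) : α x = x := by
  by_cases hx : x ∈ Y
  exacts [h.left_of_mem x hx, h.left_of_notMem x hx]

lemma IsComplementaryCollapse.right_basepoint (h : IsComplementaryCollapse α β x Y) : β x = x := by
  by_cases hx : x ∈ Y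
  exacts [h.right_of_mem x hx, h.right_of_notMem x hx]

variable [DecidableEq N] [Nontrivial N]

/-- The classes that are the product of their images under two self-maps of the space. They are
closed under multiplication since the homotopy group is commutative. -/
def splittingClasses (N : Type*) [DecidableEq N] [Nontrivial N] (hα : α x = x) (hβ : β x = x) :
    Subsemigroup (HomotopyGroup N X x) where
  carrier := {γ | piInduced N α hα γ * piInduced N β hβ γ = γ}
  mul_mem' {γ γ'} (hγ hγ') := by
    have mul_mul_mul_comm (a b c d : HomotopyGroup N X x) : a * b * (c * d) = a * c * (b * d) :=
      letI := HomotopyGroup.commGroup (N := N) (x := x)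
      mul_mul_mul_comm a b c d
    rw [Set.mem_ofPred_eq, piInduced_mul, piInduced_mul, mul_mul_mul_comm, hγ, hγ']

lemma IsComplementaryCollapse.homotopyClass_mem_splittingClasses
    (h : IsComplementaryCollapse α β x Y) {p : Ω^ N X x}
    (hp : (∀ t, p t ∈ Y) ∨ ∀ t, p t ∈ Y → p t = x) :
    homotopyClass p ∈ splittingClasses N h.left_basepoint h.right_basepoint := by
  change piInduced N α _ _ * piInduced N β _ _ = _
  simp only [piInduced_homotopyClass]
  rcases hp with hp | hp
  · have left_eq : GenLoop.compCM α h.left_basepoint p = p :=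
      GenLoop.ext _ _ fun t => h.left_of_mem _ (hp t)
    have right_eq : GenLoop.compCM β h.right_basepoint p = GenLoop.const :=
      GenLoop.ext _ _ fun t => h.right_of_mem _ (hp t)
    rw [left_eq, right_eq]
    exact mul_one _
  · have left_eq : GenLoop.compCM α h.left_basepoint p = GenLoop.const := by
      refine GenLoop.ext _ _ fun t => ?_
      by_cases ht : p t ∈ Y
      · exact (h.left_of_mem _ ht).trans (hp t ht)
      · exact h.left_of_notMem _ ht
    have right_eq : GenLoop.compCM β h.right_basepoint p = p := by
      refine GenLoop.ext _ _ fun t => ?_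
      by_cases ht : p t ∈ Y
      · exact (h.right_of_mem _ ht).trans (hp t ht).symm
      · exact h.right_of_notMem _ ht
    rw [left_eq, right_eq]
    exact one_mul _

end Splitting

section Grid

variable {N : Type*}

/-- The coordinatewise nearest-point retraction onto the unit cube. -/
def cubeProj (y : N → ℝ) : I^N := fun i => Set.projIcc 0 1 zero_le_one (y i)

lemma cubeProj_coe (t : I^N) : cubeProj (fun i => (t i : ℝ)) = t :=
  funext fun i => Set.projIcc_val zero_le_one (t i)

lemma uniformContinuous_cubeProj : UniformContinuous (cubeProj : (N → ℝ) → I^N) :=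
  uniformContinuous_pi.mpr fun i =>
    (LipschitzWith.projIcc zero_le_one).uniformContinuous.comp (Pi.uniformContinuous_proj _ i)

lemma exists_dist_cell_lt [Finite N] {V : Type*} [PseudoMetricSpace V] {g : (N → ℝ) → V}
    (hg : UniformContinuous g) {ε : ℝ} (hε : 0 < ε) :
    ∃ M : ℕ, ∀ (v : N → ℤ) (t t' : I^N), dist (g fun i => (1 / 2) ^ M * (v i + t i))
      (g fun i => (1 / 2) ^ M * (v i + t' i)) < ε := by
  have := Fintype.ofFinite N
  obtain ⟨δ, hδ, dist_lt⟩ := Metric.uniformContinuous_iff.mp hg ε hε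
  obtain ⟨M, hM⟩ := exists_pow_lt_of_lt_one hδ (by norm_num : (1 / 2 : ℝ) < 1)
  refine ⟨M, fun v t t' => dist_lt ((dist_pi_lt_iff hδ).mpr fun i => lt_of_le_of_lt ?_ hM)⟩
  rw [Real.dist_eq, ← mul_sub, add_sub_add_left_eq_sub, abs_mul, abs_of_nonneg (by positivity)]
  refine mul_le_of_le_one_right (by positivity) (abs_le.mpr ⟨?_, ?_⟩) <;>
    linarith [(t i).2.1, (t i).2.2, (t' i).2.1, (t' i).2.2]

open scoped RealInnerProductSpace

variable [Fintype N] {E : Type*} [NormedAddCommGroup E] [InnerProductSpace ℝ E]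

/-- A weight that vanishes at `y` if `y` lies on a wall of the grid of mesh `(1 / 2) ^ M`, or if
`u y` lies at distance at least `1` from the axis `ℝ ∙ e`. -/
def cellWeight (e : E) (u : (N → ℝ) → E) (M : ℕ) (y : N → ℝ) : ℝ :=
  (∏ i, |Real.sin (2 ^ M * y i * Real.pi)|) * max 0 (1 - ‖u y - ⟪e, u y⟫ • e‖)

variable {e : E} {u : (N → ℝ) → E} {M : ℕ}

lemma cellWeight_mem_Icc (y : N → ℝ) : cellWeight e u M y ∈ Set.Icc 0 1 :=
  ⟨by unfold cellWeight; positivity, mul_le_one₀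
    (Finset.prod_le_one (fun _ _ => abs_nonneg _) fun _ _ => Real.abs_sin_le_one _)
    (le_max_left _ _) (max_le zero_le_one (sub_le_self _ (norm_nonneg _)))⟩

lemma continuousOn_cellWeight {U : Set (N → ℝ)} (hu : ContinuousOn u U) :
    ContinuousOn (cellWeight e u M) U := by
  unfold cellWeight
  fun_prop

lemma cellWeight_eq_zero_iff {y : N → ℝ} : cellWeight e u M y = 0 ↔
    (∃ (i : N) (k : ℤ), y i = (1 / 2) ^ M * k) ∨ 1 ≤ ‖u y - ⟪e, u y⟫ • e‖ := by
  rw [cellWeight, mul_eq_zero, max_eq_left_iff, sub_nonpos, Finset.prod_eq_zero_iff]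
  simp only [Finset.mem_univ, true_and, abs_eq_zero, Real.sin_eq_zero_iff]
  refine or_congr_left (exists_congr fun i => exists_congr fun k => ?_)
  rw [mul_left_inj' Real.pi_ne_zero, one_div, inv_pow, ← div_eq_inv_mul,
    eq_div_iff (by positivity), mul_comm (y i), eq_comm]

end Grid

section CollapseSplitting

open EuclideanGeometry
open scoped RealInnerProductSpace

variable {E : Type*} [NormedAddCommGroup E] [InnerProductSpace ℝ E] {e : E} {A B : Set ℝ} {K : ℝ}
  {N : Type*} {F u : (N → ℝ) → E} {M : ℕ}

lemma homotopyClass_eq_of_collapse {lam : (N → ℝ) → ℝ} (he : ‖e‖ = 1)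
    (hF : ∀ y, F y ∈ tangentSpheres e A) (hu : IsInversePerturbation e F u)
    (hcollapse : Continuous (collapse e F u lam)) {x : tangentSpheres e A} (hx : (x : E) = 0)
    {f : Ω^ N (tangentSpheres e A) x} (hf : ∀ t, (f t : E) = F fun i => t i) :
    ∃ g, homotopyClass f = homotopyClass g ∧
      ∀ t, (g t : E) = collapse e F u lam (1, fun i => t i) := by
  let H : C(I × (I^N), tangentSpheres e A) :=
    ⟨fun p => ⟨collapse e F u lam (p.1, fun i => p.2 i),
        collapse_mem_tangentSpheres he hu (hF _) _⟩,
      (hcollapse.comp (by fun_prop)).subtype_mk _⟩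
  have H_boundary (s) (t) (ht : t ∈ Cube.boundary N) : H (s, t) = x := by
    have F_eq_zero : (F fun i => t i) = 0 := by rw [← hf, show f t = x from f.2 t ht, hx]
    exact Subtype.ext ((collapse_of_eq_zero F_eq_zero s).trans hx.symm)
  let g : Ω^ N (tangentSpheres e A) x :=
    ⟨H.comp ((ContinuousMap.const _ 1).prodMk (.id _)), H_boundary 1⟩
  refine ⟨g, homotopyClass_eq_of_homotopy H (fun t => Subtype.ext ?_) (fun t => rfl) H_boundary,
    fun t => rfl⟩
  exact (collapse_zero _).trans (hf t).symm

variable [Fintype N]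

lemma inv_lt_norm_of_collapse_ne_zero (he : ‖e‖ = 1) (hu : IsInversePerturbation e F u)
    (hB : ∀ b ∈ B, |b| ≤ K) {y : N → ℝ} (hy : F y ∈ tangentSpheres e B)
    (h : collapse e F u (cellWeight e u M) (1, y) ≠ 0) : (K + 2)⁻¹ < ‖F y‖ := by
  have hF : F y ≠ 0 := fun hF => h (collapse_of_eq_zero hF 1)
  have inner_mem := hy.resolve_left hF
  have norm_sub_lt : ‖u y - ⟪e, u y⟫ • e‖ < 1 := by
    have weight_ne_zero := mt collapse_one_of_eq_zero h
    rw [cellWeight_eq_zero_iff, not_or, not_le] at weight_ne_zero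
    exact weight_ne_zero.2
  have norm_axis_le : ‖⟪e, u y⟫ • e‖ ≤ K := by
    rw [norm_smul, he, mul_one, hu.inner_eq y hF]
    exact hB _ inner_mem
  have norm_inversion_lt : ‖inversion 0 1 (F y)‖ < K + 2 := by
    have := norm_sub_norm_le (u y) (⟪e, u y⟫ • e)
    have := norm_sub_norm_le (inversion 0 1 (F y)) (u y)
    rw [norm_sub_rev] at this
    linarith [hu.norm_sub_lt y hF]
  rw [norm_inversion_zero_one] at norm_inversion_lt
  exact inv_lt_of_inv_lt₀ (norm_pos_iff.mpr hF) norm_inversion_lt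

lemma cellClassesIn_splittingClasses [DecidableEq N] [Nontrivial N] (he : ‖e‖ = 1)
    (hu : IsInversePerturbation e F u) (hB : ∀ b ∈ B, |b| ≤ K) {x : tangentSpheres e A}
    (hx : (x : E) = 0) {α β : C(tangentSpheres e A, tangentSpheres e A)}
    (h : IsComplementaryCollapse α β x {z | (z : E) ∈ tangentSpheres e B})
    {G : (N → ℝ) → tangentSpheres e A} (hG : Continuous G)
    (G_eq : ∀ y, (G y : E) = collapse e F u (cellWeight e u M) (1, y))
    (cell_mem : ∀ (v : N → ℤ) (t t' : I^N),
      F (fun i => (1 / 2) ^ M * (v i + t i)) ∈ tangentSpheres e B →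
      (K + 2)⁻¹ < ‖F fun i => (1 / 2) ^ M * (v i + t i)‖ →
      F (fun i => (1 / 2) ^ M * (v i + t' i)) ∈ tangentSpheres e B) :
    CellClassesIn (splittingClasses N h.left_basepoint h.right_basepoint) G
      fun _ => (1 / 2) ^ M := by
  intro v
  let p : Ω^ N (tangentSpheres e A) x :=
    ⟨⟨fun t => G fun i => (1 / 2) ^ M * (v i + t i), hG.comp (by fun_prop)⟩, fun t ht => by
      refine Subtype.ext ((G_eq _).trans ((collapse_one_of_eq_zero ?_).trans hx.symm))
      obtain ⟨i, hi | hi⟩ := ht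
      · exact cellWeight_eq_zero_iff.mpr (Or.inl ⟨i, v i, by simp [hi]⟩)
      · exact cellWeight_eq_zero_iff.mpr (Or.inl ⟨i, v i + 1, by simp [hi]⟩)⟩
  have p_eq (t) : (p t : E) = collapse e F u (cellWeight e u M) (1, _) := G_eq _
  refine ⟨p, h.homotopyClass_mem_splittingClasses (or_iff_not_imp_right.mpr fun hp t' => ?_),
    fun t => rfl⟩
  push Not at hp
  obtain ⟨t, ht, ht_ne⟩ := hp
  rw [Ne, Subtype.ext_iff, hx, p_eq] at ht_ne
  rw [Set.mem_ofPred_eq, p_eq] at ht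
  have F_mem := mem_tangentSpheres_of_collapse_mem he hu ht_ne ht
  rw [Set.mem_ofPred_eq, p_eq]
  exact collapse_mem_tangentSpheres he hu
    (cell_mem v t t' F_mem (inv_lt_norm_of_collapse_ne_zero he hu hB F_mem ht_ne)) 1

lemma continuous_collapse_cellWeight (he : ‖e‖ = 1) (hF : Continuous F)
    (hF_inner : ∀ y, F y ≠ 0 → ⟪e, inversion 0 1 (F y)⟫ ≠ 0) (hu : IsInversePerturbation e F u)
    (u_ne : ∀ y, F y ≠ 0 → (∃ i, y i ∈ Set.range ((↑) : ℚ → ℝ)) → u y ≠ ⟪e, u y⟫ • e) :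
    Continuous (collapse e F u (cellWeight e u M)) := by
  refine continuous_collapse he hF hF_inner hu (continuousOn_cellWeight hu.continuousOn)
    cellWeight_mem_Icc fun y hy hweight => ?_
  rcases cellWeight_eq_zero_iff.mp hweight with ⟨i, k, hi⟩ | norm_ge
  · exact u_ne y hy ⟨i, (1 / 2) ^ M * k, by simp [hi]⟩
  · intro h
    rw [sub_eq_zero.mpr h, norm_zero] at norm_ge
    exact norm_ge.not_gt one_pos

lemma piInduced_mul_piInduced_eq [DecidableEq N] [Nontrivial N] (he : ‖e‖ = 1)
    (hE : Module.finrank ℝ E = Fintype.card N + 1) (hA : 0 ∉ A) (hB : Bornology.IsBounded B)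
    {X Y : Set E} (hX : X = tangentSpheres e A) (hY : Y = tangentSpheres e B) {x : X}
    (hx : (x : E) = 0) {α β : C(X, X)} (h : IsComplementaryCollapse α β x {z | (z : E) ∈ Y})
    (γ : HomotopyGroup N X x) :
    piInduced N α h.left_basepoint γ * piInduced N β h.right_basepoint γ = γ := by
  subst hX hY
  obtain ⟨f, rfl⟩ := homotopyClass_surjective γ
  obtain ⟨K, K_pos, hK⟩ := hB.exists_pos_norm_le
  let F (y : N → ℝ) : E := f (cubeProj y)
  have F_mem (y) : F y ∈ tangentSpheres e A := (f (cubeProj y)).2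
  have continuous_F : Continuous F :=
    continuous_subtype_val.comp (f.1.continuous.comp uniformContinuous_cubeProj.continuous)
  obtain ⟨u, hu, u_ne⟩ :=
    exists_isInversePerturbation_ne_smul he hE continuous_F (Set.countable_range ((↑) : ℚ → ℝ))
  obtain ⟨M, dist_lt⟩ := exists_dist_cell_lt (N := N) (g := fun y => α (f (cubeProj y)))
    ((CompactSpace.uniformContinuous_of_continuous (α.comp f.1).continuous).comp
      uniformContinuous_cubeProj) (inv_pos.mpr (by positivity : 0 < K + 2))
  have hcollapse := continuous_collapse_cellWeight (M := M) he continuous_F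
    (fun y hy h0 => hA (h0 ▸ (F_mem y).resolve_left hy)) hu u_ne
  obtain ⟨g, class_eq, hg⟩ := homotopyClass_eq_of_collapse he F_mem hu hcollapse hx (f := f)
    fun t => by simp only [F, cubeProj_coe]
  let G (y : N → ℝ) : tangentSpheres e A :=
    ⟨collapse e F u (cellWeight e u M) (1, y), collapse_mem_tangentSpheres he hu (F_mem y) 1⟩
  have continuous_G : Continuous G := (hcollapse.comp (by fun_prop)).subtype_mk _
  rw [class_eq]
  refine homotopyClass_mem_of_cellClassesIn (cellClassesIn_splittingClasses he hu hK hx h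
    continuous_G (fun y => rfl) fun v t t' ht norm_gt => ?_) fun t => Subtype.ext (hg t)
  by_contra ht'
  refine (dist_lt v t t').not_gt ?_
  rwa [h.left_of_mem _ ht, h.left_of_notMem _ ht', Subtype.dist_eq, hx, dist_zero_right]

end CollapseSplitting

section HawaiianEarring

variable {n i : ℕ}

lemma hawSphere_eq_tangentSpheres {j : ℕ} (hj : 1 ≤ j) :
    hawSphere n j = tangentSpheres (EuclideanSpace.single 0 1) {(j : ℝ) / 2} := by
  have center_eq : EuclideanSpace.single (0 : Fin (n + 1)) ((1 : ℝ) / j) =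
      ((1 : ℝ) / j) • EuclideanSpace.single 0 1 := by
    ext k
    simp
  rw [hawSphere, center_eq, sphere_eq_tangentSpheres (by simp) (by positivity)]
  congr 2
  field_simp

lemma biUnion_hawSphere_eq_tangentSpheres {J : Set ℕ} (hJ : J.Nonempty) (one_le : ∀ j ∈ J, 1 ≤ j) :
    ⋃ j ∈ J, hawSphere n j =
      tangentSpheres (EuclideanSpace.single 0 1) ((fun j : ℕ => (j : ℝ) / 2) '' J) := by
  rw [Set.iUnion₂_congr fun j hj => hawSphere_eq_tangentSpheres (one_le j hj)]
  ext z
  obtain ⟨j₀, hj₀⟩ := hJ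
  simp only [tangentSpheres, Set.mem_iUnion₂, Set.mem_image, Set.mem_ofPred_eq,
    Set.mem_singleton_iff]
  constructor
  · rintro ⟨j, hj, rfl | h⟩
    exacts [Or.inl rfl, Or.inr ⟨j, hj, h.symm⟩]
  · rintro (rfl | ⟨j, hj, h⟩)
    exacts [⟨j₀, hj₀, Or.inl rfl⟩, ⟨j, hj, Or.inr h.symm⟩]

lemma hawaiian_eq_tangentSpheres : hawaiian n =
    tangentSpheres (EuclideanSpace.single 0 1) ((fun j : ℕ => (j : ℝ) / 2) '' {j | 1 ≤ j}) :=
  biUnion_hawSphere_eq_tangentSpheres ⟨1, le_refl 1⟩ fun _ => id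

lemma Ysub_succ_eq_tangentSpheres : Ysub n (i + 1) = tangentSpheres (EuclideanSpace.single 0 1)
    ((Finset.Icc 1 (i + 1)).image fun j : ℕ => (j : ℝ) / 2 : Finset ℝ) := by
  rw [Finset.coe_image]
  exact biUnion_hawSphere_eq_tangentSpheres (J := (Finset.Icc 1 (i + 1) : Finset ℕ))
    ⟨1, by simp⟩ fun j hj => (Finset.mem_Icc.mp hj).1

lemma isCompact_Ysub : IsCompact (Ysub n i) :=
  (Finset.Icc 1 i).isCompact_biUnion fun _ _ => isCompact_sphere _ _

lemma discreteTopology_homotopyGroup_Ysub {N : Type*} :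
    ∀ x : Ysub n (i + 1), DiscreteTopology (HomotopyGroup N (Ysub n (i + 1)) x) := by
  have hcompact := isCompact_Ysub (n := n) (i := i + 1)
  rw [Ysub_succ_eq_tangentSpheres] at hcompact ⊢
  refine discreteTopology_homotopyGroup_tangentSpheres (by simp) ?_ ?_ hcompact
  · simp only [Finset.forall_mem_image, Finset.mem_Icc]
    rintro j ⟨hj, -⟩
    have : (1 : ℝ) ≤ j := mod_cast hj
    linarith
  · rw [Finset.coe_image]
    rintro _ ⟨j, -, rfl⟩ _ ⟨k, -, rfl⟩ hjk
    have one_le_dist : 1 ≤ |(j : ℝ) - k| :=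
      Nat.pairwise_one_le_dist fun h : j = k => hjk (h ▸ rfl)
    rw [Real.dist_eq, ← sub_div, abs_div, abs_two]
    linarith

lemma exists_mem_hawSphere_of_notMem_Ysub {z : EuclideanSpace ℝ (Fin (n + 1))}
    (hz : z ∈ hawaiian n) (hz' : z ∉ Ysub n i) : ∃ j, i < j ∧ z ∈ hawSphere n j := by
  obtain ⟨j, hj, hzj⟩ := Set.mem_iUnion₂.mp hz
  exact ⟨j, not_le.mp fun hji => hz' (Set.mem_biUnion (Finset.mem_Icc.mpr ⟨hj, hji⟩) hzj), hzj⟩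

lemma norm_le_of_mem_hawSphere {j : ℕ} {z : EuclideanSpace ℝ (Fin (n + 1))}
    (hz : z ∈ hawSphere n j) : ‖z‖ ≤ 2 / j := by
  have norm_le := norm_le_norm_add_norm_sub' z (EuclideanSpace.single 0 ((1 : ℝ) / j))
  rw [mem_sphere_iff_norm.mp hz, PiLp.norm_single, Real.norm_of_nonneg (by positivity)] at norm_le
  exact norm_le.trans_eq (by ring)

/-- The inclusion of `Y_{i+1}^{(n)}` into the Hawaiian earring. -/
def YsubInclusion (n i : ℕ) : C(Ysub n (i + 1), hawaiian n) :=
  ⟨Set.inclusion (Set.biUnion_mono (fun _ hj => (Finset.mem_Icc.mp hj).1) fun _ _ => subset_rfl),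
    continuous_inclusion _⟩

lemma YsubInclusion_basepoint : YsubInclusion n i (YsubPt n i) = hawaiianPt n :=
  rfl

variable {R : C(hawaiian n, Ysub n (i + 1))}

lemma exists_isComplementaryCollapse
    (hfix : ∀ z : hawaiian n, (z : EuclideanSpace ℝ (Fin (n + 1))) ∈ Ysub n (i + 1) →
      (R z : EuclideanSpace ℝ (Fin (n + 1))) = z)
    (hcoll : ∀ z : hawaiian n, (z : EuclideanSpace ℝ (Fin (n + 1))) ∉ Ysub n (i + 1) →
      (R z : EuclideanSpace ℝ (Fin (n + 1))) = 0) :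
    ∃ β, IsComplementaryCollapse ((YsubInclusion n i).comp R) β (hawaiianPt n)
      {z | (z : EuclideanSpace ℝ (Fin (n + 1))) ∈ Ysub n (i + 1)} := by
  have sub_mem (z : hawaiian n) : (z - R z : EuclideanSpace ℝ (Fin (n + 1))) ∈ hawaiian n := by
    by_cases hz : (z : EuclideanSpace ℝ (Fin (n + 1))) ∈ Ysub n (i + 1)
    · rw [hfix z hz, sub_self]
      exact zero_mem_hawaiian n
    · rw [hcoll z hz, sub_zero]
      exact z.2
  exact ⟨⟨fun z => ⟨z - R z, sub_mem z⟩, by fun_prop⟩, {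
    left_of_mem z hz := Subtype.ext (hfix z hz)
    left_of_notMem z hz := Subtype.ext (hcoll z hz)
    right_of_mem z hz := Subtype.ext (sub_eq_zero.mpr (hfix z hz).symm)
    right_of_notMem z hz := Subtype.ext ((congrArg _ (hcoll z hz)).trans (sub_zero _)) }⟩

lemma exists_norm_le_of_piInduced_eq_one [Nontrivial (Fin n)]
    (hfix : ∀ z : hawaiian n, (z : EuclideanSpace ℝ (Fin (n + 1))) ∈ Ysub n (i + 1) →
      (R z : EuclideanSpace ℝ (Fin (n + 1))) = z)
    (hcoll : ∀ j, i + 1 < j → ∀ z : hawaiian n,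
      (z : EuclideanSpace ℝ (Fin (n + 1))) ∈ hawSphere n j →
      (R z : EuclideanSpace ℝ (Fin (n + 1))) = 0)
    (hR : R (hawaiianPt n) = YsubPt n i) {γ : HomotopyGroup (Fin n) (hawaiian n) (hawaiianPt n)}
    (hγ : piInduced (Fin n) R hR γ = 1) : ∃ f, homotopyClass f = γ ∧
      ∀ t, ‖(f t : EuclideanSpace ℝ (Fin (n + 1)))‖ ≤ 2 / (i + 1) := by
  obtain ⟨β, h⟩ := exists_isComplementaryCollapse hfix fun z hz =>
    let ⟨j, hj, hzj⟩ := exists_mem_hawSphere_of_notMem_Ysub z.2 hz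
    hcoll j hj z hzj
  have left_eq_one : piInduced (Fin n) _ h.left_basepoint γ = 1 := by
    rw [piInduced_comp _ YsubInclusion_basepoint R hR, hγ, piInduced_one]
  have right_eq : piInduced (Fin n) β h.right_basepoint γ = γ := by
    rw [← one_mul (piInduced _ _ _ _), ← left_eq_one]
    exact piInduced_mul_piInduced_eq (by simp) (by simp) (by simp) (Finset.finite_toSet _).isBounded
      hawaiian_eq_tangentSpheres Ysub_succ_eq_tangentSpheres rfl h γ
  obtain ⟨f, rfl⟩ := homotopyClass_surjective γ
  refine ⟨GenLoop.compCM β h.right_basepoint f, right_eq, fun t => ?_⟩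
  change ‖(β (f t) : EuclideanSpace ℝ (Fin (n + 1)))‖ ≤ _
  by_cases ht : (f t : EuclideanSpace ℝ (Fin (n + 1))) ∈ Ysub n (i + 1)
  · rw [h.right_of_mem _ ht]
    simp only [hawaiianPt, norm_zero]
    positivity
  · rw [h.right_of_notMem _ ht]
    obtain ⟨j, hj, hzj⟩ := exists_mem_hawSphere_of_notMem_Ysub (f t).2 ht
    refine (norm_le_of_mem_hawSphere hzj).trans ?_
    gcongr
    exact_mod_cast hj.le

end HawaiianEarring

/-- For `n = m+2 ≥ 2`, the kernels `ker((R_k)_*)` of the homomorphisms induced by the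
retractions `R_k : ℋ_n → Y_{k+1}^{(n)}` form a neighborhood basis of the identity of
`π_n^{top}(ℋ_n, 0)`: each kernel is a neighborhood of the identity, and every neighborhood
of the identity contains one of the kernels. -/
theorem kernels_nhds_basis (m : ℕ)
    (R : ∀ i : ℕ, C(↥(hawaiian (m+2)), ↥(Ysub (m+2) (i+1))))
    (hRfix : ∀ (i : ℕ) (z : ↥(hawaiian (m+2))),
      (z : EuclideanSpace ℝ (Fin (m+3))) ∈ Ysub (m+2) (i+1) →
      ((R i z : ↥(Ysub (m+2) (i+1))) : EuclideanSpace ℝ (Fin (m+3))) = z)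
    (hRcoll : ∀ (i j : ℕ), i + 1 < j → ∀ z : ↥(hawaiian (m+2)),
      (z : EuclideanSpace ℝ (Fin (m+3))) ∈ hawSphere (m+2) j →
      ((R i z : ↥(Ysub (m+2) (i+1))) : EuclideanSpace ℝ (Fin (m+3))) = 0)
    (hR0 : ∀ i : ℕ, R i (hawaiianPt (m+2)) = YsubPt (m+2) i)
    :
    (∀ k : ℕ,
      {γ : HomotopyGroup (Fin (m+2)) (hawaiian (m+2)) (hawaiianPt (m+2)) |
        piInduced (Fin (m+2)) (R k) (hR0 k) γ = 1} ∈
        nhds (1 : HomotopyGroup (Fin (m+2)) (hawaiian (m+2)) (hawaiianPt (m+2)))) ∧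
    ∀ W ∈ nhds (1 : HomotopyGroup (Fin (m+2)) (hawaiian (m+2)) (hawaiianPt (m+2))),
      ∃ k : ℕ,
        {γ : HomotopyGroup (Fin (m+2)) (hawaiian (m+2)) (hawaiianPt (m+2)) |
          piInduced (Fin (m+2)) (R k) (hR0 k) γ = 1} ⊆ W := by
  refine ⟨fun k => ?_, fun W hW => ?_⟩
  · have := discreteTopology_homotopyGroup_Ysub (N := Fin (m + 2)) (YsubPt (m + 2) k)
    exact ker_piInduced_mem_nhds (R k) (hR0 k)
  · obtain ⟨ε, hε, mem_of_dist_lt⟩ := exists_homotopyClass_mem_of_dist_lt hW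
    obtain ⟨k, hk⟩ := exists_nat_gt (2 / ε)
    refine ⟨k, fun γ hγ => ?_⟩
    obtain ⟨f, rfl, norm_le⟩ :=
      exists_norm_le_of_piInduced_eq_one (hRfix k) (hRcoll k) (hR0 k) hγ
    refine mem_of_dist_lt f fun t => ?_
    calc dist (f t) (hawaiianPt (m + 2))
        = ‖(f t : EuclideanSpace ℝ (Fin (m + 3)))‖ := dist_zero_right (f t).1
      _ ≤ 2 / (k + 1) := norm_le t
      _ < ε := (div_lt_comm₀ (by positivity) hε).mpr (hk.trans (lt_add_one _))
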